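/- For every u ∈ LC(ℝⁿ) there exists a sequence u_k of piecewise affine functions in PA(ℝⁿ) that τ-converges to u; moreover the sequence can be chosen so that the Lipschitz constants of the u_k are bounded by the Lipschitz constant of u. -/

import Mathlib

open MeasureTheory Filter Topology Pointwise Asymptotics

noncomputable section

variable {E : Type*} [NormedAddCommGroup E] [NormedSpace ℝ E]

/-- The effective domain of an extended-real-valued function. -/
def edom (u : E → EReal) : Set E := {x | u x < ⊤}

/-- `u` has Lipschitz constant `L` on the interior of its domain. -/
def LipBound (u : E → EReal) (L : ℝ) : Prop :=
  ∀ x ∈ interior (edom u), ∀ y ∈ interior (edom u),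
    |(u x).toReal - (u y).toReal| ≤ L * ‖x - y‖

/-- Membership in `LC`: proper, lower semicontinuous, convex, compact domain,
Lipschitz on the interior of the domain. -/
def IsLC (u : E → EReal) : Prop :=
  (∀ x y : E, ∀ t : ℝ, 0 < t → t < 1 →
      u (t • x + (1 - t) • y) ≤ (t : EReal) * u x + ((1 - t : ℝ) : EReal) * u y) ∧
  LowerSemicontinuous u ∧
  (∀ x, u x ≠ ⊥) ∧
  (∃ x, u x ≠ ⊤) ∧
  IsCompact (edom u) ∧
  (∃ L : ℝ, 0 < L ∧ LipBound u L)

/-- τ-convergence: epi-convergence together with uniformly bounded Lipschitz constants. -/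
def TauConv (uk : ℕ → E → EReal) (u : E → EReal) : Prop :=
  (∀ k, IsLC (uk k)) ∧ IsLC u ∧
  (∀ (x : E) (xk : ℕ → E), Tendsto xk atTop (𝓝 x) →
      u x ≤ liminf (fun k => uk k (xk k)) atTop) ∧
  (∀ x : E, ∃ xk : ℕ → E, Tendsto xk atTop (𝓝 x) ∧
      Tendsto (fun k => uk k (xk k)) atTop (𝓝 (u x))) ∧
  (∃ M : ℝ, 0 < M ∧ ∀ k, LipBound (uk k) M)

/-- Valuation property on `LC`. -/
def IsVal (Z : (E → EReal) → ℝ) : Prop :=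
  ∀ u v : E → EReal, IsLC u → IsLC v → IsLC (fun x => min (u x) (v x)) →
    Z (fun x => min (u x) (v x)) + Z (fun x => max (u x) (v x)) = Z u + Z v

/-- τ-upper semicontinuity. -/
def TauUSC (Z : (E → EReal) → ℝ) : Prop :=
  ∀ (uk : ℕ → E → EReal) (u : E → EReal), TauConv uk u →
    limsup (fun k => Z (uk k)) atTop ≤ Z u

/-- τ-continuity. -/
def TauCont (Z : (E → EReal) → ℝ) : Prop :=
  ∀ (uk : ℕ → E → EReal) (u : E → EReal), TauConv uk u →
    Tendsto (fun k => Z (uk k)) atTop (𝓝 (Z u))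

/-- Translation invariance. -/
def TransInv (Z : (E → EReal) → ℝ) : Prop :=
  ∀ u : E → EReal, IsLC u → ∀ y : E, Z (fun x => u (x - y)) = Z u

/-- Dual epi-translation invariance. -/
def DualTransInv (Z : (E → EReal) → ℝ) : Prop :=
  ∀ u : E → EReal, IsLC u → ∀ (l : E →ₗ[ℝ] ℝ) (c : ℝ),
    Z (fun x => u x + ((l x + c : ℝ) : EReal)) = Z u

/-- SL_n invariance. -/
def SLInv (Z : (E → EReal) → ℝ) : Prop :=
  ∀ u : E → EReal, IsLC u → ∀ φ : E →ₗ[ℝ] E, LinearMap.det φ = 1 →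
    Z (fun x => u (φ x)) = Z u

/-- The class `Conc`. -/
def IsConc (ζ : ℝ → ℝ) : Prop :=
  (∀ t ∈ Set.Ici (0 : ℝ), 0 ≤ ζ t) ∧ ConcaveOn ℝ (Set.Ici 0) ζ ∧
  Tendsto ζ (𝓝[>] 0) (𝓝 0) ∧
  Tendsto (fun t => ζ t / t) atTop (𝓝 0)

open Classical in
/-- `(∞-valued) indicator function` of a set. -/
noncomputable def eIndicator (K : Set E) : E → EReal := fun x =>
  if x ∈ K then (0 : EReal) else ⊤

/-- Real part of an extended-real-valued function. -/
def toRealFn (u : E → EReal) : E → ℝ := fun x => (u x).toReal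

open Classical in
/-- Second derivative of `u`, set to `0` where `u` is not twice differentiable. -/
noncomputable def secondDeriv (u : ℝ → EReal) : ℝ → ℝ := fun x =>
  if DifferentiableAt ℝ (toRealFn u) x ∧ DifferentiableAt ℝ (deriv (toRealFn u)) x
  then deriv (deriv (toRealFn u)) x
  else 0

/-- A polytope: the convex hull of a nonempty finite set of points. -/
def IsPolytope {F : Type*} [AddCommGroup F] [Module ℝ F] (P : Set F) : Prop :=
  ∃ s : Finset F, s.Nonempty ∧ P = convexHull ℝ (s : Set F)

/-- Membership in `PA(ℝⁿ)`: a function of the form `u = min_i (w_i + I_{P_i})` with `w_i`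
affine and `P_i` polytopes with pairwise disjoint interiors whose union is a polytope. -/
def IsPA (u : E → EReal) : Prop :=
  IsLC u ∧
  ∃ (m : ℕ) (w : Fin (m + 1) → E →ₗ[ℝ] ℝ) (b : Fin (m + 1) → ℝ)
    (P : Fin (m + 1) → Set E),
    (∀ i, IsPolytope (P i)) ∧
    (∀ i j, i ≠ j → interior (P i) ∩ interior (P j) = ∅) ∧
    IsPolytope (⋃ i, P i) ∧
    ∀ x, u x = ⨅ i, (((w i x + b i : ℝ) : EReal) + eIndicator (P i) x)


section helpers

set_option linter.unusedSectionVars false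

variable {V : Type*} [NormedAddCommGroup V] [NormedSpace ℝ V] [FiniteDimensional ℝ V]

/-- Evaluation of an affine function. -/
def aev (a : (V →ₗ[ℝ] ℝ) × ℝ) (x : V) : ℝ := a.1 x + a.2

theorem aev_cont (a : (V →ₗ[ℝ] ℝ) × ℝ) : Continuous (aev a) :=
  (LinearMap.continuous_of_finiteDimensional a.1).add continuous_const

theorem aev_combo (a : (V →ₗ[ℝ] ℝ) × ℝ) (x y : V) (s t : ℝ) (h : s + t = 1) :
    aev a (s • x + t • y) = s * aev a x + t * aev a y := by
  simp only [aev, map_add, map_smul, smul_eq_mul]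
  linear_combination (-a.2) * h

/-- Polyhedron. -/
def poly (H : Finset ((V →ₗ[ℝ] ℝ) × ℝ)) : Set V := {x | ∀ h ∈ H, aev h x ≤ 0}

theorem poly_closed (H : Finset ((V →ₗ[ℝ] ℝ) × ℝ)) : IsClosed (poly H) := by
  have : poly H = ⋂ h ∈ H, {x | aev h x ≤ 0} := by ext; simp [poly]
  rw [this]
  exact isClosed_biInter fun h _ => isClosed_le (aev_cont h) continuous_const

theorem poly_convex (H : Finset ((V →ₗ[ℝ] ℝ) × ℝ)) : Convex ℝ (poly H) := by
  intro x hx y hy s t hs ht hst h hh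
  rw [aev_combo _ _ _ _ _ hst]
  have := hx h hh
  have := hy h hh
  nlinarith

theorem poly_polytope (H : Finset ((V →ₗ[ℝ] ℝ) × ℝ)) (hne : (poly H).Nonempty)
    (hb : Bornology.IsBounded (poly H)) : IsPolytope (poly H) := by
  classical
  have hc : IsCompact (poly H) := Metric.isCompact_of_isClosed_isBounded (poly_closed H) hb
  have hfin : ((poly H).extremePoints ℝ).Finite := by
    apply Set.Finite.of_injOn (f := fun x => H.filter (fun h => aev h x = 0))
      (t := (H.powerset : Set (Finset ((V →ₗ[ℝ] ℝ) × ℝ))))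
    · intro x _
      exact Finset.mem_coe.2 (Finset.mem_powerset.2 (Finset.filter_subset _ _))
    · intro x hx y hy hxy
      by_contra hne
      rw [mem_extremePoints_iff_left] at hx
      have hact : ∀ h ∈ H, aev h x = 0 → aev h y = 0 := by
        intro h hh h0
        have : h ∈ H.filter (fun h => aev h x = 0) := by simp [hh, h0]
        simp only at hxy
        rw [hxy] at this
        simpa [hh] using this
      have key : ∀ᶠ e : ℝ in 𝓝 0, ∀ h ∈ H, aev h ((1 - e) • x + e • y) ≤ 0 := by
        rw [Filter.eventually_all_finset]
        intro h hh
        by_cases h0 : aev h x = 0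
        · refine Filter.Eventually.of_forall fun e => ?_
          rw [aev_combo _ _ _ _ _ (by ring), h0, hact h hh h0]; simp
        · have hlt : aev h x < 0 := lt_of_le_of_ne (hx.1 h hh) h0
          have hcont : Continuous fun e : ℝ => aev h ((1 - e) • x + e • y) :=
            (aev_cont h).comp (by fun_prop)
          have : ∀ᶠ e : ℝ in 𝓝 0, aev h ((1 - e) • x + e • y) < 0 := by
            apply (hcont.tendsto 0).eventually_lt_const
            simpa using hlt
          exact this.mono fun _ h => h.le
      rw [Metric.eventually_nhds_iff] at key
      obtain ⟨ε, hε, hk⟩ := key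
      have h1 := hk (y := ε / 2) (by rw [Real.dist_eq, sub_zero, abs_of_pos (by linarith)]; linarith)
      have h2 := hk (y := -(ε / 2)) (by
        rw [Real.dist_eq, sub_zero, abs_neg, abs_of_pos (by linarith)]; linarith)
      have := hx.2 _ h1 _ h2 ⟨1 / 2, 1 / 2, by norm_num, by norm_num, by norm_num, by module⟩
      apply hne
      have h3 : (ε / 2) • (y - x) = 0 := by
        have : (1 - ε / 2) • x + (ε / 2) • y - x = 0 := by rw [this]; simp
        rw [← this]; module
      rw [smul_eq_zero] at h3
      rcases h3 with h3 | h3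
      · linarith
      · exact (sub_eq_zero.1 h3).symm
    · exact Finset.finite_toSet _
  have hkm := closure_convexHull_extremePoints hc (poly_convex H)
  rw [(hfin.isClosed_convexHull ℝ).closure_eq] at hkm
  refine ⟨hfin.toFinset, ?_, by simp [hkm]⟩
  rw [Set.Finite.toFinset_nonempty]
  exact hc.extremePoints_nonempty hne

open Classical in
/-- The max of finitely many affine functions, restricted to a polyhedron. -/
def maxfn (A : Finset ((V →ₗ[ℝ] ℝ) × ℝ)) (hA : A.Nonempty) (H : Finset ((V →ₗ[ℝ] ℝ) × ℝ)) :
    V → EReal :=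
  fun x => if x ∈ poly H then ((A.sup' hA (fun a => aev a x) : ℝ) : EReal) else ⊤

variable {A : Finset ((V →ₗ[ℝ] ℝ) × ℝ)} {hA : A.Nonempty} {H : Finset ((V →ₗ[ℝ] ℝ) × ℝ)}

theorem maxfn_edom : edom (maxfn A hA H) = poly H := by
  ext x
  by_cases h : x ∈ poly H <;> simp [edom, maxfn, h, EReal.coe_lt_top]

theorem maxfn_lip {L : ℝ}
    (h : interior (poly H) = ∅ ∨ ∀ a ∈ A, ∀ x, |a.1 x| ≤ L * ‖x‖) :
    LipBound (maxfn A hA H) L := by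
  intro x hx y hy
  rw [maxfn_edom] at hx hy
  rcases h with h | h
  · simp [h] at hx
  have main : ∀ x y : V, A.sup' hA (fun a => aev a x) ≤ A.sup' hA (fun a => aev a y) + L * ‖x - y‖ := by
    intro x y
    apply Finset.sup'_le
    intro a ha
    have h1 := Finset.le_sup' (fun a => aev a y) ha
    have h2 := (abs_le.1 (h a ha (x - y))).2
    rw [map_sub] at h2
    simp only [aev] at *
    linarith
  have h1 := main x y
  have h2 := main y x
  rw [norm_sub_rev] at h2
  simp only [maxfn, interior_subset hx, interior_subset hy, if_true, EReal.toReal_coe]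
  rw [abs_le]
  constructor <;> linarith

theorem maxfn_LC {L : ℝ} (hL : 0 < L) (hne : (poly H).Nonempty)
    (hb : Bornology.IsBounded (poly H)) (hl : LipBound (maxfn A hA H) L) :
    IsLC (maxfn A hA H) := by
  have hnb : ∀ x, maxfn A hA H x ≠ ⊥ := by
    intro x
    by_cases h : x ∈ poly H <;> simp [maxfn, h]
  refine ⟨?_, ?_, hnb, ?_, ?_, L, hL, hl⟩
  · intro x y t ht ht1
    have hnb' : ∀ (s : ℝ) (x : V), 0 < s → (s : EReal) * maxfn A hA H x ≠ ⊥ := by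
      intro s x hs
      by_cases h : x ∈ poly H
      · simp only [maxfn, h, if_true, ← EReal.coe_mul]
        exact EReal.coe_ne_bot _
      · simp only [maxfn, h, if_false, EReal.coe_mul_top_of_pos hs]
        simp
    by_cases hx : x ∈ poly H
    · by_cases hy : y ∈ poly H
      · have hxy := poly_convex H hx hy ht.le (sub_nonneg.2 ht1.le) (by ring)
        simp only [maxfn, hx, hy, hxy, if_true, ← EReal.coe_mul, ← EReal.coe_add]
        rw [EReal.coe_le_coe_iff]
        apply Finset.sup'_le
        intro a ha
        rw [aev_combo _ _ _ _ _ (by ring)]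
        have h1 := Finset.le_sup' (fun a => aev a x) ha
        have h2 := Finset.le_sup' (fun a => aev a y) ha
        have h3 := mul_le_mul_of_nonneg_left h1 ht.le
        have h4 := mul_le_mul_of_nonneg_left h2 (sub_nonneg.2 ht1.le)
        linarith
      · have : maxfn A hA H y = ⊤ := by simp [maxfn, hy]
        rw [this, EReal.coe_mul_top_of_pos (sub_pos.2 ht1), EReal.add_top_of_ne_bot (hnb' t x ht)]
        exact le_top
    · have : maxfn A hA H x = ⊤ := by simp [maxfn, hx]
      rw [this, EReal.coe_mul_top_of_pos ht,
        EReal.top_add_of_ne_bot (hnb' _ y (sub_pos.2 ht1))]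
      exact le_top
  · intro x c hc
    by_cases hx : x ∈ poly H
    · simp only [maxfn, hx, if_true] at hc
      have hcont : Continuous fun x => ((A.sup' hA (fun a => aev a x) : ℝ) : EReal) :=
        continuous_coe_real_ereal.comp
          (Continuous.finset_sup'_apply hA (fun a _ => aev_cont a))
      filter_upwards [(hcont.tendsto x).eventually_const_lt hc] with y hy
      by_cases h : y ∈ poly H
      · simpa [maxfn, h] using hy
      · simp only [maxfn, h, if_false]
        exact hy.trans_le le_top
    · filter_upwards [(poly_closed H).isOpen_compl.mem_nhds hx] with y hy
      simp only [maxfn, hx, if_false] at hc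
      have : y ∉ poly H := hy
      simpa only [maxfn, this, if_false] using hc
  · obtain ⟨x, hx⟩ := hne
    exact ⟨x, by simp [maxfn, hx]⟩
  · rw [maxfn_edom]
    exact Metric.isCompact_of_isClosed_isBounded (poly_closed H) hb

theorem aev_eq_interior (a b : (V →ₗ[ℝ] ℝ) × ℝ) (S : Set V) (hS : ∀ x ∈ S, aev a x = aev b x)
    (hne : (interior S).Nonempty) : a = b := by
  obtain ⟨x, hx⟩ := hne
  have hlin : a.1 = b.1 := by
    ext v
    have hcont : Continuous fun e : ℝ => x + e • v := by fun_prop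
    have : ∀ᶠ e : ℝ in 𝓝 0, x + e • v ∈ S := by
      apply (hcont.tendsto 0).eventually
      simpa using mem_interior_iff_mem_nhds.1 hx
    rw [Metric.eventually_nhds_iff] at this
    obtain ⟨ε, hε, hk⟩ := this
    have h1 := hS _ (hk (y := ε / 2) (by
      rw [Real.dist_eq, sub_zero, abs_of_pos (by linarith)]; linarith))
    have h0 := hS _ (interior_subset hx)
    simp only [aev, map_add, map_smul, smul_eq_mul] at h1 h0
    have : ε / 2 * (a.1 v) = ε / 2 * (b.1 v) := by linarith
    exact mul_left_cancel₀ (by positivity) this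
  have h0 := hS _ (interior_subset hx)
  simp only [aev, hlin] at h0
  exact Prod.ext hlin (by linarith)

theorem maxfn_PA {L : ℝ} (hL : 0 < L) (hne : (poly H).Nonempty)
    (hb : Bornology.IsBounded (poly H)) (hl : LipBound (maxfn A hA H) L) :
    IsPA (maxfn A hA H) := by
  classical
  refine ⟨maxfn_LC hL hne hb hl, ?_⟩
  let Hq : ((V →ₗ[ℝ] ℝ) × ℝ) → Finset ((V →ₗ[ℝ] ℝ) × ℝ) := fun a => H ∪ A.image (fun c => c - a)
  have hmem : ∀ a x, x ∈ poly (Hq a) ↔ x ∈ poly H ∧ ∀ c ∈ A, aev c x ≤ aev a x := by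
    intro a x
    have : ∀ c, aev (c - a) x = aev c x - aev a x := by
      intro c; simp [aev]; ring
    simp only [poly, Hq, Finset.mem_union, Finset.mem_image, Set.mem_ofPred_eq]
    constructor
    · intro h
      refine ⟨fun h' hh => h _ (Or.inl hh), fun c hc => ?_⟩
      have := h _ (Or.inr ⟨c, hc, rfl⟩)
      linarith [‹∀ c, aev (c - a) x = aev c x - aev a x› c]
    · rintro ⟨h1, h2⟩ h' (hh | ⟨c, hc, rfl⟩)
      · exact h1 _ hh
      · rw [this]; linarith [h2 c hc]
  have hex : ∀ x ∈ poly H, ∃ a ∈ A, x ∈ poly (Hq a) := by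
    intro x hx
    obtain ⟨a, ha, h⟩ := A.exists_max_image (fun a => aev a x) hA
    exact ⟨a, ha, (hmem a x).2 ⟨hx, h⟩⟩
  let S := A.filter (fun a => (poly (Hq a)).Nonempty)
  have hSne : S.Nonempty := by
    obtain ⟨x, hx⟩ := hne
    obtain ⟨a, ha, h⟩ := hex x hx
    exact ⟨a, Finset.mem_filter.2 ⟨ha, x, h⟩⟩
  obtain ⟨m, hm⟩ : ∃ m, S.card = m + 1 := ⟨S.card - 1, by have := hSne.card_pos; omega⟩
  let e : Fin (m + 1) ≃ S := (S.equivFinOfCardEq hm).symm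
  have heA : ∀ i, (e i : (V →ₗ[ℝ] ℝ) × ℝ) ∈ A := fun i => (Finset.mem_filter.1 (e i).2).1
  have hsup : ∀ x ∈ poly H, ∃ i, x ∈ poly (Hq (e i)) := by
    intro x hx
    obtain ⟨a, ha, h⟩ := hex x hx
    refine ⟨e.symm ⟨a, Finset.mem_filter.2 ⟨ha, x, h⟩⟩, ?_⟩
    simpa using h
  have hunion : (⋃ i, poly (Hq (e i))) = poly H := by
    ext x
    simp only [Set.mem_iUnion]
    exact ⟨fun ⟨i, hi⟩ => ((hmem _ _).1 hi).1, hsup x⟩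
  refine ⟨m, fun i => (e i).1.1, fun i => (e i).1.2, fun i => poly (Hq (e i)), ?_, ?_, ?_, ?_⟩
  · intro i
    exact poly_polytope _ (Finset.mem_filter.1 (e i).2).2
      (hb.subset fun x hx => ((hmem _ _).1 hx).1)
  · intro i j hij
    by_contra hcon
    apply hij
    rw [← interior_inter] at hcon
    apply e.injective
    apply Subtype.ext
    refine aev_eq_interior _ _ _ ?_ (Set.nonempty_iff_ne_empty.2 hcon)
    rintro x ⟨h1, h2⟩
    exact le_antisymm (((hmem _ _).1 h2).2 _ (heA i)) (((hmem _ _).1 h1).2 _ (heA j))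
  · rw [hunion]
    exact poly_polytope _ hne hb
  · intro x
    have hval : ∀ i, x ∈ poly (Hq (e i)) →
        A.sup' hA (fun a => aev a x) = aev (e i).1 x := by
      intro i hi
      apply le_antisymm
      · exact Finset.sup'_le _ _ ((hmem _ _).1 hi).2
      · exact Finset.le_sup' (fun a => aev a x) (heA i)
    apply le_antisymm
    · apply le_iInf
      intro i
      by_cases h : x ∈ poly (Hq (e i))
      · have hx := ((hmem _ _).1 h).1
        simp only [maxfn, hx, if_true, eIndicator, h, add_zero, hval i h]
        rfl
      · simp only [eIndicator, h, if_false, EReal.coe_add_top]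
        exact le_top
    · by_cases hx : x ∈ poly H
      · obtain ⟨i, hi⟩ := hsup x hx
        refine (iInf_le _ i).trans ?_
        simp only [maxfn, hx, if_true, eIndicator, hi, add_zero, hval i hi]
        rfl
      · simp only [maxfn, hx, if_false]
        exact le_top

end helpers

section helpers2

variable {V : Type*} [NormedAddCommGroup V] [NormedSpace ℝ V]

theorem lc_coe {u : V → EReal} (hu : IsLC u) {x : V} (hx : x ∈ edom u) :
    ((u x).toReal : EReal) = u x :=
  EReal.coe_toReal (ne_of_lt hx) (hu.2.2.1 x)

theorem lc_convexOn {u : V → EReal} (hu : IsLC u) :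
    ConvexOn ℝ (edom u) (fun x => (u x).toReal) := by
  have key : ∀ x ∈ edom u, ∀ y ∈ edom u, ∀ t : ℝ, 0 < t → t < 1 →
      u (t • x + (1 - t) • y) ≤ ((t * (u x).toReal + (1 - t) * (u y).toReal : ℝ) : EReal) := by
    intro x hx y hy t ht ht1
    have := hu.1 x y t ht ht1
    rwa [← lc_coe hu hx, ← lc_coe hu hy, ← EReal.coe_mul, ← EReal.coe_mul, ← EReal.coe_add] at this
  have hconv : Convex ℝ (edom u) := by
    rw [convex_iff_forall_pos]
    intro x hx y hy a b ha hb hab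
    obtain rfl : b = 1 - a := by linarith
    exact (key x hx y hy a ha (by linarith)).trans_lt (EReal.coe_lt_top _)
  rw [convexOn_iff_forall_pos]
  refine ⟨hconv, ?_⟩
  intro x hx y hy a b ha hb hab
  obtain rfl : b = 1 - a := by linarith
  have h1 := key x hx y hy a ha (by linarith)
  rw [← lc_coe hu (hconv hx hy ha.le hb.le hab), EReal.coe_le_coe_iff] at h1
  simpa using h1

theorem lc_lip {u : V → EReal} (hu : IsLC u) {L : ℝ} (hL : 0 < L) (hLip : LipBound u L)
    (hint : (interior (edom u)).Nonempty) {x y : V} (hx : x ∈ edom u) (hy : y ∈ edom u) :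
    (u x).toReal ≤ (u y).toReal + L * ‖x - y‖ := by
  obtain ⟨z, hz⟩ := hint
  have hcv := lc_convexOn hu
  apply le_of_forall_lt
  intro s hs
  obtain ⟨s', hs', hs''⟩ := exists_between hs
  refine lt_of_lt_of_le hs' ?_
  have hlsc : ∀ᶠ w in 𝓝 x, (s' : EReal) < u w := hu.2.1 x _ (by
    change (s' : EReal) < u x
    rw [← lc_coe hu hx]; exact_mod_cast hs'')
  have hcont : Continuous fun t : ℝ => (1 - t) • x + t • z := by fun_prop
  have h1 : ∀ᶠ t : ℝ in 𝓝[>] 0, (s' : EReal) < u ((1 - t) • x + t • z) := by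
    apply Filter.Eventually.filter_mono nhdsWithin_le_nhds
    refine (hcont.tendsto 0).eventually (p := fun w => (s' : EReal) < u w) ?_
    simpa using hlsc
  have h2 : ∀ᶠ t : ℝ in 𝓝[>] 0, t < 1 :=
    Filter.Eventually.filter_mono nhdsWithin_le_nhds (eventually_lt_nhds one_pos)
  have h3 : ∀ᶠ t : ℝ in 𝓝[>] 0,
      s' ≤ (1 - t) * (u y).toReal + t * (u z).toReal + L * ((1 - t) * ‖x - y‖) := by
    filter_upwards [h1, h2, self_mem_nhdsWithin] with t ht1 ht2 ht3
    have ht3 : 0 < t := ht3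
    have hxt := hcv.1.combo_self_interior_mem_interior hx hz (sub_nonneg.2 ht2.le) ht3 (by ring)
    have hyt := hcv.1.combo_self_interior_mem_interior hy hz (sub_nonneg.2 ht2.le) ht3 (by ring)
    have h4 := hLip _ hxt _ hyt
    have h5 := hcv.2 hy (interior_subset hz) (sub_nonneg.2 ht2.le) ht3.le (by ring)
    rw [← lc_coe hu (interior_subset hxt), EReal.coe_lt_coe_iff] at ht1
    have h6 : ((1 - t) • x + t • z) - ((1 - t) • y + t • z) = (1 - t) • (x - y) := by module
    rw [h6, norm_smul, Real.norm_of_nonneg (sub_nonneg.2 ht2.le)] at h4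
    have h7 := (abs_le.1 h4).2
    simp only [smul_eq_mul] at h5
    linarith
  have hc2 : Continuous fun t : ℝ =>
      (1 - t) * (u y).toReal + t * (u z).toReal + L * ((1 - t) * ‖x - y‖) := by fun_prop
  have h8 := (hc2.tendsto 0).mono_left (nhdsWithin_le_nhds (s := Set.Ioi 0))
  have h9 := ge_of_tendsto h8 h3
  simpa using h9

theorem minorA {K : Set V} {v : V → ℝ} (hv : ConvexOn ℝ K v) {L : ℝ} (hL : 0 < L)
    (hLip : ∀ x ∈ K, ∀ y ∈ K, v x ≤ v y + L * ‖x - y‖) {x : V} (hx : x ∈ K) :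
    ∃ a : (V →ₗ[ℝ] ℝ) × ℝ, (∀ y ∈ K, aev a y ≤ v y) ∧ v x ≤ aev a x ∧
      ∀ y, |a.1 y| ≤ L * ‖y‖ := by
  let C : Set (V × ℝ) := {p | p.2 < v x - L * ‖p.1 - x‖}
  have hCo : IsOpen C := isOpen_lt (by fun_prop) (by fun_prop)
  have hCc : Convex ℝ C := by
    intro p hp q hq s t hs ht hst
    have hp : p.2 < v x - L * ‖p.1 - x‖ := hp
    have hq : q.2 < v x - L * ‖q.1 - x‖ := hq
    change s * p.2 + t * q.2 < v x - L * ‖s • p.1 + t • q.1 - x‖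
    have h1 : s • p.1 + t • q.1 - x = s • (p.1 - x) + t • (q.1 - x) := by
      have : x = (s + t) • x := by rw [hst, one_smul]
      nth_rw 1 [this]; module
    have h2 : ‖s • p.1 + t • q.1 - x‖ ≤ s * ‖p.1 - x‖ + t * ‖q.1 - x‖ := by
      rw [h1]
      refine (norm_add_le _ _).trans ?_
      rw [norm_smul, norm_smul, Real.norm_of_nonneg hs, Real.norm_of_nonneg ht]
    have h3 := mul_le_mul_of_nonneg_left h2 hL.le
    have h4 : s * p.2 + t * q.2 < s * (v x - L * ‖p.1 - x‖) + t * (v x - L * ‖q.1 - x‖) := by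
      rcases hs.eq_or_lt with rfl | hs'
      · have : t = 1 := by linarith
        subst this; linarith
      · have := mul_lt_mul_of_pos_left hp hs'
        have := mul_le_mul_of_nonneg_left hq.le ht
        linarith
    have h5 : s * v x + t * v x = v x := by rw [← add_mul, hst, one_mul]
    nlinarith
  have hdisj : Disjoint C {p : V × ℝ | p.1 ∈ K ∧ v p.1 ≤ p.2} := by
    rw [Set.disjoint_left]
    rintro p hp ⟨h1, h2⟩
    have hp : p.2 < v x - L * ‖p.1 - x‖ := hp
    have := hLip x hx p.1 h1
    rw [norm_sub_rev] at this
    linarith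
  obtain ⟨f, r, hf1, hf2⟩ := geometric_hahn_banach_open hCc hCo hv.convex_epigraph hdisj
  have hsplit : ∀ y s, f (y, s) = f (y, 0) + s * f (0, 1) := by
    intro y s
    have : (y, s) = (y, (0 : ℝ)) + s • ((0 : V), (1 : ℝ)) := by simp
    rw [this, map_add, map_smul, smul_eq_mul]
  set c := f (0, 1) with hc
  have hcpos : 0 < c := by
    have h1 := hf1 (x, v x - 1) (by change v x - 1 < v x - L * ‖x - x‖; simp)
    have h2 := hf2 (x, v x) ⟨hx, le_rfl⟩
    rw [hsplit] at h1 h2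
    linarith
  let g : V →ₗ[ℝ] ℝ := (-c⁻¹) • (f.toLinearMap ∘ₗ LinearMap.inl ℝ V ℝ)
  have hg : ∀ y, g y = - c⁻¹ * f (y, 0) := by
    intro y; simp [g]
  let a : (V →ₗ[ℝ] ℝ) × ℝ := (g, c⁻¹ * r)
  have ha : ∀ y, aev a y = c⁻¹ * (r - f (y, 0)) := by
    intro y
    simp only [aev, a, hg]; ring
  have hlow : ∀ y, v x - L * ‖y - x‖ ≤ aev a y := by
    intro y
    rw [ha]
    apply le_of_forall_lt
    intro s hs
    have := hf1 (y, s) hs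
    rw [hsplit] at this
    rw [lt_inv_mul_iff₀ hcpos]
    linarith
  have hup : ∀ y ∈ K, aev a y ≤ v y := by
    intro y hy
    have := hf2 (y, v y) ⟨hy, le_rfl⟩
    rw [hsplit] at this
    rw [ha, inv_mul_le_iff₀ hcpos]
    linarith
  have hax : v x ≤ aev a x := by simpa using hlow x
  have hlin : ∀ y, -(L * ‖y‖) ≤ a.1 y := by
    intro y
    have h1 := hlow (x + y)
    have h2 := hup x hx
    simp only [aev, map_add, add_sub_cancel_left] at h1 h2
    linarith
  refine ⟨a, hup, hax, fun y => abs_le.2 ⟨hlin y, ?_⟩⟩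
  have := hlin (-y)
  simp only [map_neg, norm_neg] at this
  linarith

theorem minorB {K : Set V} {v : V → ℝ} (hv : ConvexOn ℝ K v)
    (hcl : IsClosed {p : V × ℝ | p.1 ∈ K ∧ v p.1 ≤ p.2}) {x : V} (hx : x ∈ K) {t : ℝ}
    (ht : t < v x) :
    ∃ a : (V →ₗ[ℝ] ℝ) × ℝ, (∀ y ∈ K, aev a y ≤ v y) ∧ t < aev a x := by
  obtain ⟨f, r, hf1, hf2⟩ := geometric_hahn_banach_point_closed (x := (x, t)) hv.convex_epigraph hcl
    (by rintro ⟨_, h⟩; exact absurd h (not_le.2 ht))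
  have hsplit : ∀ y s, f (y, s) = f (y, 0) + s * f (0, 1) := by
    intro y s
    have : (y, s) = (y, (0 : ℝ)) + s • ((0 : V), (1 : ℝ)) := by simp
    rw [this, map_add, map_smul, smul_eq_mul]
  set c := f (0, 1) with hc
  have hcpos : 0 < c := by
    have h2 := hf2 (x, v x) ⟨hx, le_rfl⟩
    rw [hsplit] at hf1 h2
    have : 0 < (v x - t) * c := by linarith
    exact (pos_iff_pos_of_mul_pos this).1 (by linarith)
  let g : V →ₗ[ℝ] ℝ := (-c⁻¹) • (f.toLinearMap ∘ₗ LinearMap.inl ℝ V ℝ)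
  have hg : ∀ y, g y = - c⁻¹ * f (y, 0) := by
    intro y; simp [g]
  have ha : ∀ y, aev (g, c⁻¹ * r) y = c⁻¹ * (r - f (y, 0)) := by
    intro y
    simp only [aev, hg]; ring
  refine ⟨(g, c⁻¹ * r), ?_, ?_⟩
  · intro y hy
    have := hf2 (y, v y) ⟨hy, le_rfl⟩
    rw [hsplit] at this
    rw [ha, inv_mul_le_iff₀ hcpos]
    linarith
  · rw [hsplit] at hf1
    rw [ha, lt_inv_mul_iff₀ hcpos]
    linarith

theorem lc_epi_closed {u : V → EReal} (hu : IsLC u) :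
    IsClosed {p : V × ℝ | p.1 ∈ edom u ∧ (u p.1).toReal ≤ p.2} := by
  have h1 := hu.2.1.isClosed_epigraph
  have h2 : Continuous fun p : V × ℝ => ((p.1, (p.2 : EReal)) : V × EReal) :=
    continuous_fst.prodMk (continuous_coe_real_ereal.comp continuous_snd)
  convert h1.preimage h2 using 1
  ext p
  simp only [Set.mem_preimage, Set.mem_ofPred_eq]
  constructor
  · rintro ⟨h3, h4⟩
    rw [← lc_coe hu h3]; exact_mod_cast h4
  · intro h
    have h3 : p.1 ∈ edom u := h.trans_lt (EReal.coe_lt_top _)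
    refine ⟨h3, ?_⟩
    rw [← lc_coe hu h3] at h
    exact_mod_cast h

variable [FiniteDimensional ℝ V]

/-- Countable selection of affine minorants. -/
theorem seq_minor {K : Set V} {v : V → ℝ} (hK : K.Nonempty) (G : Set ((V →ₗ[ℝ] ℝ) × ℝ))
    (h : ∀ x ∈ K, ∀ t < v x, ∃ a ∈ G, t < aev a x) :
    ∃ a : ℕ → (V →ₗ[ℝ] ℝ) × ℝ, (∀ j, a j ∈ G) ∧ ∀ x ∈ K, ∀ t < v x, ∃ j, t < aev (a j) x := by
  have : SecondCountableTopology V := by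
    have := FiniteDimensional.proper ℝ V
    infer_instance
  obtain ⟨T, hT, hU⟩ := TopologicalSpace.isOpen_iUnion_countable
    (fun a : G => {p : V × ℝ | p.2 < aev a.1 p.1})
    (fun a => isOpen_lt continuous_snd ((aev_cont a.1).comp continuous_fst))
  have hsel : ∀ x ∈ K, ∀ t < v x, ∃ a ∈ T, t < aev a.1 x := by
    intro x hx t ht
    obtain ⟨a, ha, hat⟩ := h x hx t ht
    have : (x, t) ∈ ⋃ a : G, {p : V × ℝ | p.2 < aev a.1 p.1} := Set.mem_iUnion.2 ⟨⟨a, ha⟩, hat⟩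
    rw [← hU] at this
    simp only [Set.mem_iUnion] at this
    obtain ⟨b, hb, hbt⟩ := this
    exact ⟨b, hb, hbt⟩
  have hTne : T.Nonempty := by
    obtain ⟨x, hx⟩ := hK
    obtain ⟨a, ha, _⟩ := hsel x hx (v x - 1) (by linarith)
    exact ⟨a, ha⟩
  obtain ⟨f, hf⟩ := hT.exists_eq_range hTne
  refine ⟨fun j => (f j).1, fun j => (f j).2, fun x hx t ht => ?_⟩
  obtain ⟨a, ha, hat⟩ := hsel x hx t ht
  rw [hf] at ha
  obtain ⟨j, rfl⟩ := ha
  exact ⟨j, hat⟩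

theorem seq_half {K : Set V} (hc : Convex ℝ K) (hcl : IsClosed K) :
    ∃ h : ℕ → (V →ₗ[ℝ] ℝ) × ℝ, (∀ j, ∀ x ∈ K, aev (h j) x ≤ 0) ∧
      ∀ x ∉ K, ∃ j, 0 < aev (h j) x := by
  by_cases hne : (Kᶜ).Nonempty
  swap
  · refine ⟨fun _ => 0, fun j x _ => by simp [aev], fun x hx => absurd ⟨x, hx⟩ hne⟩
  obtain ⟨a, ha, hb⟩ := seq_minor (K := Kᶜ) (v := fun _ => 1) hne
    (G := {a | ∀ x ∈ K, aev a x ≤ 0}) (by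
      intro x hx t ht
      obtain ⟨f, r, hf1, hf2⟩ := geometric_hahn_banach_point_closed hc hcl hx
      refine ⟨((-(r - f x)⁻¹) • f.toLinearMap, (r - f x)⁻¹ * r), ?_, ?_⟩
      · intro y hy
        have h1 : 0 < (r - f x)⁻¹ := by rw [inv_pos]; linarith
        have h2 := hf2 y hy
        have : aev ((-(r - f x)⁻¹) • f.toLinearMap, (r - f x)⁻¹ * r) y = (r - f x)⁻¹ * (r - f y) := by
          simp [aev]; ring
        rw [this]
        nlinarith
      · have : aev ((-(r - f x)⁻¹) • f.toLinearMap, (r - f x)⁻¹ * r) x = (r - f x)⁻¹ * (r - f x) := by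
          simp [aev]; ring
        rw [this, inv_mul_cancel₀ (by linarith)]
        exact ht)
  exact ⟨a, ha, fun x hx => hb x hx 0 one_pos⟩

/-- A convex set with empty interior lies in a hyperplane. -/
theorem hyper {K : Set V} (hc : Convex ℝ K) (hne : K.Nonempty) (hint : interior K = ∅) :
    ∃ a : (V →ₗ[ℝ] ℝ) × ℝ, a ≠ 0 ∧ ∀ x ∈ K, aev a x = 0 := by
  obtain ⟨x0, hx0⟩ := hne
  have h1 : affineSpan ℝ K ≠ ⊤ := by
    intro h
    rw [← hc.interior_nonempty_iff_affineSpan_eq_top, hint] at h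
    exact Set.not_nonempty_empty h
  have h2 : (affineSpan ℝ K).direction < ⊤ := by
    rw [lt_top_iff_ne_top]
    intro h
    apply h1
    exact (AffineSubspace.direction_eq_top_iff_of_nonempty
      ⟨x0, subset_affineSpan ℝ K hx0⟩).1 h
  obtain ⟨f, hf, hker⟩ := Submodule.exists_le_ker_of_lt_top _ h2
  refine ⟨(f, - f x0), ?_, ?_⟩
  · intro h
    exact hf (Prod.ext_iff.1 h).1
  · intro x hx
    have := hker (AffineSubspace.vsub_mem_direction (subset_affineSpan ℝ K hx)
      (subset_affineSpan ℝ K hx0))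
    rw [LinearMap.mem_ker, vsub_eq_sub, map_sub] at this
    simp only [aev]
    linarith

end helpers2

section helpers3

theorem box_exists {n : ℕ} {K : Set (EuclideanSpace ℝ (Fin n))} (hc : Convex ℝ K)
    (hne : K.Nonempty) (hK : IsCompact K) :
    ∃ H : Finset ((EuclideanSpace ℝ (Fin n) →ₗ[ℝ] ℝ) × ℝ), K ⊆ poly H ∧
      Bornology.IsBounded (poly H) ∧ (interior K = ∅ → interior (poly H) = ∅) := by
  classical
  obtain ⟨R, hR⟩ := hK.isBounded.exists_norm_le
  let pr : Fin n → EuclideanSpace ℝ (Fin n) →ₗ[ℝ] ℝ := fun i => (EuclideanSpace.proj i).toLinearMap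
  have hpr : ∀ i x, pr i x = x i := fun i x => rfl
  let B : Finset ((EuclideanSpace ℝ (Fin n) →ₗ[ℝ] ℝ) × ℝ) :=
    (Finset.univ.image fun i => (pr i, -R)) ∪ (Finset.univ.image fun i => (-pr i, -R))
  have hB : ∀ x, x ∈ poly B ↔ ∀ i, |x i| ≤ R := by
    intro x
    simp only [poly, B, Finset.mem_union, Finset.mem_image, Finset.mem_univ, true_and,
      Set.mem_ofPred_eq]
    constructor
    · intro h i
      have h1 := h _ (Or.inl ⟨i, rfl⟩)
      have h2 := h _ (Or.inr ⟨i, rfl⟩)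
      simp only [aev, LinearMap.neg_apply, hpr] at h1 h2
      rw [abs_le]
      constructor <;> linarith
    · rintro h _ (⟨i, rfl⟩ | ⟨i, rfl⟩)
      · have := abs_le.1 (h i)
        simp only [aev, hpr]; linarith [this.2]
      · have := abs_le.1 (h i)
        simp only [aev, LinearMap.neg_apply, hpr]; linarith [this.1]
  have hKB : K ⊆ poly B := by
    intro x hx
    rw [hB]
    intro i
    exact (PiLp.norm_apply_le x i).trans (hR x hx)
  have hBb : Bornology.IsBounded (poly B) := by
    rw [isBounded_iff_forall_norm_le]
    refine ⟨Real.sqrt (∑ _i : Fin n, R ^ 2), fun x hx => ?_⟩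
    rw [EuclideanSpace.norm_eq]
    apply Real.sqrt_le_sqrt
    apply Finset.sum_le_sum
    intro i _
    have := (hB x).1 hx i
    exact pow_le_pow_left₀ (norm_nonneg _) this 2
  by_cases hint : interior K = ∅
  · obtain ⟨a, ha, haK⟩ := hyper hc hne hint
    have haneg : ∀ x, aev (-a) x = - aev a x := by intro x; simp [aev]; ring
    have hsub : poly (B ∪ {a, -a}) ⊆ poly B := fun x hx h hh => hx h (Finset.mem_union_left _ hh)
    refine ⟨B ∪ {a, -a}, ?_, hBb.subset hsub, fun _ => ?_⟩
    · intro x hx h hh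
      rcases Finset.mem_union.1 hh with hh | hh
      · exact hKB hx h hh
      · simp only [Finset.mem_insert, Finset.mem_singleton] at hh
        rcases hh with rfl | rfl
        · exact (haK x hx).le
        · rw [haneg, haK x hx]; simp
    · by_contra hcon
      apply ha
      refine aev_eq_interior a 0 _ ?_ (Set.nonempty_iff_ne_empty.2 hcon)
      intro x hx
      have h1 := hx a (by simp)
      have h2 := hx (-a) (by simp)
      rw [haneg] at h2
      have : aev 0 x = 0 := by simp [aev]
      rw [this]
      linarith
  · exact ⟨B, hKB, hBb, fun h => absurd h hint⟩

end helpers3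

/-- Every `u ∈ LC(ℝⁿ)` is the τ-limit of a sequence of piecewise affine
functions in `PA(ℝⁿ)`, whose Lipschitz constants are moreover bounded by the Lipschitz
constant of `u`. -/
theorem stmt9 (n : ℕ) (u : EuclideanSpace ℝ (Fin n) → EReal) (hu : IsLC u)
    (L : ℝ) (hL : 0 < L) (hLip : LipBound u L) :
    ∃ uk : ℕ → EuclideanSpace ℝ (Fin n) → EReal,
      (∀ k, IsPA (uk k)) ∧ TauConv uk u ∧ ∀ k, LipBound (uk k) L := by
  classical
  have hcv := lc_convexOn hu
  have hKc : IsCompact (edom u) := hu.2.2.2.2.1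
  have hKne : (edom u).Nonempty := by
    obtain ⟨x, hx⟩ := hu.2.2.2.1
    exact ⟨x, lt_top_iff_ne_top.2 hx⟩
  obtain ⟨H0, hKH, hHb, hHi⟩ := box_exists hcv.1 hKne hKc
  obtain ⟨h, hh1, hh2⟩ := seq_half hcv.1 hKc.isClosed
  obtain ⟨a, ha1, ha2⟩ := seq_minor (v := fun x => (u x).toReal) hKne
    {a | (∀ y ∈ edom u, aev a y ≤ (u y).toReal) ∧
      (interior (edom u) = ∅ ∨ ∀ y, |a.1 y| ≤ L * ‖y‖)} (by
      intro x hx t ht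
      by_cases hint : interior (edom u) = ∅
      · obtain ⟨a, h1, h2⟩ := minorB hcv (lc_epi_closed hu) hx ht
        exact ⟨a, ⟨h1, Or.inl hint⟩, h2⟩
      · obtain ⟨a, h1, h2, h3⟩ := minorA hcv hL
          (fun x hx y hy => lc_lip hu hL hLip (Set.nonempty_iff_ne_empty.2 hint) hx hy) hx
        exact ⟨a, ⟨h1, Or.inr h3⟩, ht.trans_le h2⟩)
  let A : ℕ → Finset ((EuclideanSpace ℝ (Fin n) →ₗ[ℝ] ℝ) × ℝ) :=
    fun k => (Finset.range (k + 1)).image a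
  have hA : ∀ k, (A k).Nonempty := fun k => ⟨a 0, Finset.mem_image.2 ⟨0, by simp, rfl⟩⟩
  have hAm : ∀ k j, j ≤ k → a j ∈ A k := fun k j hj =>
    Finset.mem_image.2 ⟨j, Finset.mem_range.2 (by omega), rfl⟩
  let H : ℕ → Finset ((EuclideanSpace ℝ (Fin n) →ₗ[ℝ] ℝ) × ℝ) :=
    fun k => H0 ∪ (Finset.range (k + 1)).image h
  have hHm : ∀ k j, j ≤ k → h j ∈ H k := fun k j hj =>
    Finset.mem_union_right _ (Finset.mem_image.2 ⟨j, Finset.mem_range.2 (by omega), rfl⟩)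
  have hsub : ∀ k, poly (H k) ⊆ poly H0 := fun k x hx g hg => hx g (Finset.mem_union_left _ hg)
  have hKk : ∀ k, edom u ⊆ poly (H k) := by
    intro k x hx g hg
    rcases Finset.mem_union.1 hg with hg | hg
    · exact hKH hx g hg
    · obtain ⟨j, _, rfl⟩ := Finset.mem_image.1 hg
      exact hh1 j x hx
  have hlip : ∀ k, LipBound (maxfn (A k) (hA k) (H k)) L := by
    intro k
    apply maxfn_lip
    by_cases hint : interior (edom u) = ∅
    · left
      rw [← Set.subset_empty_iff, ← hHi hint]
      exact interior_mono (hsub k)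
    · right
      intro b hb
      obtain ⟨j, _, rfl⟩ := Finset.mem_image.1 hb
      exact (ha1 j).2.resolve_left hint
  have hPA : ∀ k, IsPA (maxfn (A k) (hA k) (H k)) := fun k =>
    maxfn_PA hL (hKne.mono (hKk k)) (hHb.subset (hsub k)) (hlip k)
  have hlow : ∀ (x : EuclideanSpace ℝ (Fin n)) (xk : ℕ → EuclideanSpace ℝ (Fin n)),
      Tendsto xk atTop (𝓝 x) → ∀ c < u x, ∀ᶠ k in atTop, c < maxfn (A k) (hA k) (H k) (xk k) := by
    intro x xk hxk c hc
    by_cases hx : x ∈ edom u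
    · obtain ⟨t, hct, htu⟩ := EReal.lt_iff_exists_real_btwn.1 hc
      rw [← lc_coe hu hx, EReal.coe_lt_coe_iff] at htu
      obtain ⟨j, hj⟩ := ha2 x hx t htu
      have h1 := (((aev_cont (a j)).tendsto x).comp hxk).eventually_const_lt hj
      filter_upwards [h1, eventually_ge_atTop j] with k hk1 hk2
      by_cases hm : xk k ∈ poly (H k)
      · simp only [maxfn, hm, if_true]
        refine hct.trans ?_
        rw [EReal.coe_lt_coe_iff]
        exact lt_of_lt_of_le hk1 (Finset.le_sup' (fun b => aev b (xk k)) (hAm k j hk2))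
      · simp only [maxfn, hm, if_false]
        exact hc.trans_le le_top
    · obtain ⟨j, hj⟩ := hh2 x hx
      have h1 := (((aev_cont (h j)).tendsto x).comp hxk).eventually_const_lt hj
      filter_upwards [h1, eventually_ge_atTop j] with k hk1 hk2
      have hm : xk k ∉ poly (H k) := fun hm => absurd (hm _ (hHm k j hk2)) (not_le.2 hk1)
      simp only [maxfn, hm, if_false]
      exact hc.trans_le le_top
  have hupp : ∀ k x, maxfn (A k) (hA k) (H k) x ≤ u x := by
    intro k x
    by_cases hx : x ∈ edom u
    · simp only [maxfn, hKk k hx, if_true]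
      rw [← lc_coe hu hx, EReal.coe_le_coe_iff]
      apply Finset.sup'_le
      intro b hb
      obtain ⟨j, _, rfl⟩ := Finset.mem_image.1 hb
      exact (ha1 j).1 x hx
    · have : u x = ⊤ := not_lt_top_iff.1 hx
      rw [this]
      exact le_top
  refine ⟨fun k => maxfn (A k) (hA k) (H k), hPA,
    ⟨fun k => (hPA k).1, hu, ?_, ?_, L, hL, hlip⟩, hlip⟩
  · intro x xk hxk
    apply le_of_forall_lt_imp_le_of_dense
    intro c hc
    exact le_liminf_of_le (by isBoundedDefault) ((hlow x xk hxk c hc).mono fun _ h => h.le)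
  · intro x
    refine ⟨fun _ => x, tendsto_const_nhds, ?_⟩
    rw [tendsto_order]
    exact ⟨fun c hc => hlow x _ tendsto_const_nhds c hc,
      fun c hc => Eventually.of_forall fun k => (hupp k x).trans_lt hc⟩

end
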